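/- Let k > 1 and let A₀ = (S, ℒ₀, ∥₀) be a finite affine partial linear space in which every line has the same size κ and every ∥₀-equivalence class has the same size δ₀. Then there is no equivalence relation ∥ on the blocks of V_k(S, ℒ₀) such that: (i) distinct ∥-parallel blocks are disjoint; (ii) every ∥-equivalence class covers the point set 𝔶_k(S); (iii) all ∥-equivalence classes have the same cardinality; and (iv) every leaf of V_k(S, ℒ₀) is closed under ∥, in the sense that for every block B, every leaf T, and every point f ∈ T, there is a block B' with f ∈ B' ⊆ T and B' ∥ B. -/

import Mathlib

def veroBlock {S : Type*} (e : Multiset S) (r : ℕ) (B : Set S) : Set (Multiset S) :=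
  { m | ∃ x ∈ B, m = e + Multiset.replicate r x }

def veroBlocks {S : Type*} (k : ℕ) (L : Set (Set S)) : Set (Set (Multiset S)) :=
  { Bl | ∃ (r : ℕ) (e : Multiset S) (B : Set S),
      0 < r ∧ r ≤ k ∧ Multiset.card e = k - r ∧ B ∈ L ∧ Bl = veroBlock e r B }

def veroPoints (S : Type*) (k : ℕ) : Set (Multiset S) :=
  { m | Multiset.card m = k }

def veroLeaves (S : Type*) (k : ℕ) : Set (Set (Multiset S)) :=
  { T | ∃ (r : ℕ) (e : Multiset S),
      0 < r ∧ r ≤ k ∧ Multiset.card e = k - r ∧ T = veroBlock e r Set.univ }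

def VerAdj {S : Type*} (k : ℕ) (L : Set (Set S)) (f g : Multiset S) : Prop :=
  ∃ Bl ∈ veroBlocks k L, f ∈ Bl ∧ g ∈ Bl

def AtLeastThree {α : Type*} (B : Set α) : Prop :=
  ∃ a b c, a ∈ B ∧ b ∈ B ∧ c ∈ B ∧ a ≠ b ∧ a ≠ c ∧ b ≠ c

def IsPLS {α : Type*} (L : Set (Set α)) : Prop :=
  L.Nonempty ∧ (∀ B ∈ L, AtLeastThree B) ∧
    ∀ p q : α, p ≠ q → ∀ B₁ ∈ L, ∀ B₂ ∈ L,
      p ∈ B₁ → q ∈ B₁ → p ∈ B₂ → q ∈ B₂ → B₁ = B₂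

def IsLinearSpace {α : Type*} (L : Set (Set α)) : Prop :=
  IsPLS L ∧ ∀ p q : α, p ≠ q → ∃ B ∈ L, p ∈ B ∧ q ∈ B

def IsSubspace {α : Type*} (Blk : Set (Set α)) (X : Set α) : Prop :=
  ∀ B ∈ Blk, (∃ p ∈ B ∩ X, ∃ q ∈ B ∩ X, p ≠ q) → B ⊆ X

def IsHyperplane {α : Type*} (L : Set (Set α)) (X : Set α) : Prop :=
  IsSubspace L X ∧ (∀ B ∈ L, (B ∩ X).Nonempty) ∧ X ≠ Set.univ

def Veblenian {α : Type*} (L : Set (Set α)) : Prop :=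
  ∀ (p : α) (L₁ L₂ M₁ M₂ : Set α), L₁ ∈ L → L₂ ∈ L → M₁ ∈ L → M₂ ∈ L →
    L₁ ≠ L₂ → L₁ ≠ M₁ → L₁ ≠ M₂ → L₂ ≠ M₁ → L₂ ≠ M₂ → M₁ ≠ M₂ →
    p ∈ L₁ → p ∈ L₂ → p ∉ M₁ → p ∉ M₂ →
    (L₁ ∩ M₁).Nonempty → (L₁ ∩ M₂).Nonempty →
    (L₂ ∩ M₁).Nonempty → (L₂ ∩ M₂).Nonempty →
    (M₁ ∩ M₂).Nonempty

def IsVeroHyperplane {S : Type*} (k : ℕ) (L : Set (Set S)) (X : Set (Multiset S)) : Prop :=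
  X ⊆ veroPoints S k ∧ X ≠ veroPoints S k ∧
    IsSubspace (veroBlocks k L) X ∧ ∀ B ∈ veroBlocks k L, (B ∩ X).Nonempty

def addPt {S : Type*} (a : S) (m : Set S) : Set (Multiset S) :=
  { t | ∃ x ∈ m, t = ({a, x} : Multiset S) }

def dbl {S : Type*} (m : Set S) : Set (Multiset S) :=
  { t | ∃ x ∈ m, t = ({x, x} : Multiset S) }

/-!
If two sets of points are closed under a parallelism, then so is their intersection: through a
common point there is only one block parallel to a given block, so it lies in both sets. A nonempty
closed set contains a whole block, hence at least two points. For `k > 1`, however, the leaves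
`{k·x : x ∈ S}` and `{(k - 1)·p + x : x ∈ S}` have only the point `k·p` in common.
-/

section ParallelClosed

variable {P : Type*} {blocks : Set (Set P)} {par : Set P → Set P → Prop} {T T' : Set P}

/-- The set of points `T` is closed under the parallelism `par` on `blocks`: through each of its
points, `T` contains a block parallel to any prescribed block, which need not itself meet `T`. -/
def IsParallelClosed (blocks : Set (Set P)) (par : Set P → Set P → Prop) (T : Set P) : Prop :=
  ∀ B ∈ blocks, ∀ f ∈ T, ∃ M, f ∈ M ∧ M ⊆ T ∧ par M B

theorem eq_of_parallel_of_mem [Std.Symm par] [IsTrans (Set P) par]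
    (hdisj : ∀ B M, par B M → B ≠ M → Disjoint B M) {B M M' : Set P} {f : P}
    (hM : par M B) (hM' : par M' B) (hfM : f ∈ M) (hfM' : f ∈ M') : M = M' := by
  by_contra hne
  exact Set.disjoint_left.1 (hdisj M M' (_root_.trans hM (symm hM')) hne) hfM hfM'

theorem IsParallelClosed.inter [Std.Symm par] [IsTrans (Set P) par]
    (hdisj : ∀ B M, par B M → B ≠ M → Disjoint B M)
    (hT : IsParallelClosed blocks par T) (hT' : IsParallelClosed blocks par T') :
    IsParallelClosed blocks par (T ∩ T') := by
  rintro B hB f ⟨hfT, hfT'⟩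
  obtain ⟨M, hfM, hMT, hM⟩ := hT B hB f hfT
  obtain ⟨M', hfM', hMT', hM'⟩ := hT' B hB f hfT'
  obtain rfl : M = M' := eq_of_parallel_of_mem hdisj hM hM' hfM hfM'
  exact ⟨M, hfM, Set.subset_inter hMT hMT', hM⟩

theorem IsParallelClosed.nontrivial (hT : IsParallelClosed blocks par T)
    (hblocks : blocks.Nonempty) (hpar : ∀ B M, par B M → B.Nontrivial) (hne : T.Nonempty) :
    T.Nontrivial := by
  obtain ⟨B, hB⟩ := hblocks
  obtain ⟨f, hf⟩ := hne
  obtain ⟨M, -, hMT, hM⟩ := hT B hB f hf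
  exact (hpar M B hM).mono hMT

end ParallelClosed

theorem AtLeastThree.nontrivial {α : Type*} {B : Set α} (hB : AtLeastThree B) : B.Nontrivial := by
  obtain ⟨a, b, _, ha, hb, _, hab, _⟩ := hB
  exact ⟨a, ha, b, hb, hab⟩

section Veronese

variable {S : Type*} {k r : ℕ} {ℒ : Set (Set S)}

theorem veroBlock_nontrivial {B : Set S} (hB : B.Nontrivial) (hr : r ≠ 0) (e : Multiset S) :
    (veroBlock e r B).Nontrivial := by
  obtain ⟨a, ha, b, hb, hab⟩ := hB
  refine ⟨_, ⟨a, ha, rfl⟩, _, ⟨b, hb, rfl⟩, fun h => hab ?_⟩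
  exact Multiset.replicate_right_injective hr (add_left_cancel h)

theorem nontrivial_of_mem_veroBlocks (hℒ : ∀ L ∈ ℒ, L.Nontrivial) {B : Set (Multiset S)}
    (hB : B ∈ veroBlocks k ℒ) : B.Nontrivial := by
  obtain ⟨r, e, L, hr, -, -, hL, rfl⟩ := hB
  exact veroBlock_nontrivial (hℒ L hL) hr.ne' e

theorem veroBlocks_nonempty (hk : 0 < k) (hℒ : ℒ.Nonempty) : (veroBlocks k ℒ).Nonempty := by
  obtain ⟨L, hL⟩ := hℒ
  exact ⟨veroBlock 0 k L, k, 0, L, hk, le_rfl, by simp, hL, rfl⟩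

theorem veroBlock_zero_inter_subset_singleton {e : Multiset S} {p : S} (hp : p ∈ e)
    (k r : ℕ) (A B : Set S) :
    veroBlock 0 k A ∩ veroBlock e r B ⊆ {Multiset.replicate k p} := by
  rintro m ⟨⟨x, -, rfl⟩, _, -, hy⟩
  have hpx : p ∈ 0 + Multiset.replicate k x := hy ▸ Multiset.mem_add.2 (.inl hp)
  rw [zero_add] at hpx ⊢
  rw [Multiset.eq_of_mem_replicate hpx, Set.mem_singleton_iff]

theorem exists_veroLeaves_inter_eq_singleton (hk : 1 < k) (p : S) :
    ∃ T ∈ veroLeaves S k, ∃ T' ∈ veroLeaves S k, T ∩ T' = {Multiset.replicate k p} := by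
  refine ⟨veroBlock 0 k Set.univ, ⟨k, 0, by omega, le_rfl, by simp, rfl⟩,
    veroBlock (Multiset.replicate (k - 1) p) 1 Set.univ, ⟨1, _, one_pos, hk.le, by simp, rfl⟩,
    Set.Subset.antisymm ?_ (Set.singleton_subset_iff.2 ⟨?_, ?_⟩)⟩
  · exact veroBlock_zero_inter_subset_singleton
      (Multiset.mem_replicate.2 ⟨Nat.sub_ne_zero_of_lt hk, rfl⟩) k 1 _ _
  · exact ⟨p, Set.mem_univ p, (zero_add _).symm⟩
  · exact ⟨p, Set.mem_univ p, by rw [← Multiset.replicate_add, Nat.sub_add_cancel hk.le]⟩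

theorem stmt_19_general (hk : 1 < k) (hne : ℒ.Nonempty) (hℒ : ∀ L ∈ ℒ, L.Nontrivial)
    {par : Set (Multiset S) → Set (Multiset S) → Prop} [Std.Symm par] [IsTrans _ par]
    (hmem : ∀ B M, par B M → B ∈ veroBlocks k ℒ)
    (hdisj : ∀ B M, par B M → B ≠ M → Disjoint B M) :
    ¬ ∀ T ∈ veroLeaves S k, IsParallelClosed (veroBlocks k ℒ) par T := by
  intro hleaf
  obtain ⟨L, hL⟩ := hne
  obtain ⟨p, -⟩ := (hℒ L hL).nonempty
  obtain ⟨T, hT, T', hT', hTT'⟩ := exists_veroLeaves_inter_eq_singleton hk p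
  have hclosed := (hleaf T hT).inter hdisj (hleaf T' hT')
  rw [hTT'] at hclosed
  exact Set.not_nontrivial_singleton <| hclosed.nontrivial (veroBlocks_nonempty (by omega) ⟨L, hL⟩)
    (fun B M h => nontrivial_of_mem_veroBlocks hℒ (hmem B M h)) (Set.singleton_nonempty _)

end Veronese

theorem stmt_19 {S : Type*} [Fintype S] (ℒ : Set (Set S)) (par₀ : Set S → Set S → Prop)
    (hPLS : IsPLS ℒ)
    (hmem : ∀ L M : Set S, par₀ L M → L ∈ ℒ ∧ M ∈ ℒ)
    (hrefl : ∀ L ∈ ℒ, par₀ L L)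
    (hsymm : ∀ L M : Set S, par₀ L M → par₀ M L)
    (htrans : ∀ L M N : Set S, par₀ L M → par₀ M N → par₀ L N)
    (hdisj : ∀ L M : Set S, par₀ L M → L ≠ M → L ∩ M = ∅)
    (hcover : ∀ L ∈ ℒ, ∀ p : S, ∃ M, par₀ L M ∧ p ∈ M)
    (κ δ₀ : ℕ)
    (hκ : ∀ L ∈ ℒ, L.ncard = κ)
    (hδ₀ : ∀ L ∈ ℒ, { M : Set S | par₀ L M }.ncard = δ₀)
    (k : ℕ) (hk : 1 < k) :
    ¬ ∃ par : Set (Multiset S) → Set (Multiset S) → Prop,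
      (∀ B M : Set (Multiset S), par B M → B ∈ veroBlocks k ℒ ∧ M ∈ veroBlocks k ℒ) ∧
      (∀ B ∈ veroBlocks k ℒ, par B B) ∧
      (∀ B M : Set (Multiset S), par B M → par M B) ∧
      (∀ B M N : Set (Multiset S), par B M → par M N → par B N) ∧
      (∀ B M : Set (Multiset S), par B M → B ≠ M → B ∩ M = ∅) ∧
      (∀ B ∈ veroBlocks k ℒ, ∀ f ∈ veroPoints S k, ∃ M, par B M ∧ f ∈ M) ∧
      (∃ N : ℕ, ∀ B ∈ veroBlocks k ℒ, { M : Set (Multiset S) | par B M }.ncard = N) ∧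
      (∀ B ∈ veroBlocks k ℒ, ∀ T ∈ veroLeaves S k, ∀ f ∈ T,
        ∃ M : Set (Multiset S), f ∈ M ∧ M ⊆ T ∧ par M B) := by
  rintro ⟨par, hmem', -, hsymm', htrans', hdisj', -, -, hleaf⟩
  have : Std.Symm par := ⟨hsymm'⟩
  have : IsTrans _ par := ⟨htrans'⟩
  exact stmt_19_general hk hPLS.1 (fun L hL => (hPLS.2.1 L hL).nontrivial)
    (fun B M h => (hmem' B M h).1)
    (fun B M h hne => Set.disjoint_iff_inter_eq_empty.2 (hdisj' B M h hne))
    (fun T hT B hB => hleaf B hB T hT)
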